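/- arXiv:2409.07086 — 2 statements merged into one kernel-verified Lean document; each statement's English description precedes it below -/
import Mathlib

section
/- Let F be a finite field with q = #F, let W be a Weierstrass curve over F with nonzero discriminant (an elliptic curve), let L be a finite field extension of F of degree m > 1, and suppose the number of points of W over F (including the point at infinity) equals the number of points of the base change of W to L. Then (q, m) is one of the four pairs (2,2), (2,3), (3,2), (4,2). -/
/-!
The proof is Stepanov's method with multiplicity two. For a Weierstrass curve over a finite field
`K` of odd order `Q` the auxiliary polynomial `H = 2f(f^((Q-1)/2) + 1) + f'(X^Q - X)`, where
`f = 4X³ + b₂X² + 2b₄X + b₆`, has degree `3(Q+1)/2`. It vanishes at the roots of `f`, above each of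
which there is a point, and doubly at each `x` such that `f x` is not a square; above every other
`x` there are two points. Hence for each `x ∈ K` the multiplicity of `x` as a
root of `H` plus the number of points above `x` is at least `2`, and summing over `x` gives
`2Q ≤ 3(Q+1)/2 + N` for the number `N` of affine points (`card_le_of_odd`).

In characteristic two, write the curve as `y² + h y = f`. Its points above an `x` with `h x ≠ 0` are
governed by the absolute trace of `f/h²`, so the Euler criterion is replaced by additive
Hilbert 90 and `f^((Q-1)/2)` by the polynomial `∑ f^(2^i) h^(Q-2^(i+1))`, which is `h^Q` times that
trace. The same count gives `Q ≤ 2N + 2` for `Q ≥ 8` (`card_le_of_even`).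

On the other side there are at most `2q` affine points over `F`, so equality of the two point
numbers forces `q^m ≤ 4q + 3` for odd `q`, and `q^m ≤ 4q + 2` or `q^m < 8` for even `q`. Only the
four listed pairs satisfy this.
-/

open Polynomial in
/-- If the root multiplicities of `H` and a weight `c` add up to at least `2` at each point of `K`,
then the total weight is at least `2 #K - deg H`. -/
theorem two_mul_card_le {K : Type*} [Field K] [Fintype K] (H : K[X])
    (c : K → ℕ) (h : ∀ x, 2 ≤ H.rootMultiplicity x + c x) :
    2 * Fintype.card K ≤ H.natDegree + ∑ x, c x := by
  classical
  calc 2 * Fintype.card K = ∑ _x : K, 2 := by simp [mul_comm]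
    _ ≤ ∑ x, (H.rootMultiplicity x + c x) := Finset.sum_le_sum fun x _ => h x
    _ = ∑ x, H.roots.count x + ∑ x, c x := by
        simp only [Finset.sum_add_distrib, count_roots]
    _ = H.roots.card + ∑ x, c x := by
        rw [Multiset.sum_count_eq_card fun _ _ => Finset.mem_univ _]
    _ ≤ _ := by gcongr; exact card_roots' H

/-- The number of affine points of `W` above `x`. -/
noncomputable def fiberCard {K : Type*} [Field K] (W : WeierstrassCurve K) (x : K) : ℕ :=
  Nat.card {y : K // W.toAffine.Equation x y}

theorem card_points {K : Type*} [Field K] [Fintype K] (W : WeierstrassCurve K) :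
    Nat.card {p : K × K // W.toAffine.Equation p.1 p.2} = ∑ x, fiberCard W x := by
  let e : {p : K × K // W.toAffine.Equation p.1 p.2} ≃
      Σ x : K, {y : K // W.toAffine.Equation x y} :=
    { toFun := fun p => ⟨p.1.1, p.1.2, p.2⟩
      invFun := fun p => ⟨(p.1, p.2.1), p.2.2⟩
      left_inv := fun _ => rfl
      right_inv := fun _ => rfl }
  rw [Nat.card_congr e, Nat.card_sigma]
  rfl

theorem fiberCard_le {K : Type*} [Field K] [Fintype K] (W : WeierstrassCurve K) (x : K) :
    fiberCard W x ≤ 2 := by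
  classical
  unfold fiberCard
  by_cases hne : ∃ y₀, W.toAffine.Equation x y₀
  · obtain ⟨y₀, h₀⟩ := hne
    rw [Nat.card_eq_fintype_card, Fintype.card_subtype]
    refine (Finset.card_le_card (t := {y₀, -y₀ - (W.a₁ * x + W.a₃)}) ?_).trans
      Finset.card_le_two
    intro y hy
    simp only [Finset.mem_filter, Finset.mem_univ, true_and] at hy
    rw [WeierstrassCurve.Affine.equation_iff] at hy h₀
    have : (y - y₀) * (y - (-y₀ - (W.a₁ * x + W.a₃))) = 0 := by
      linear_combination hy - h₀
    rcases mul_eq_zero.1 this with h | h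
    · simp [sub_eq_zero.1 h]
    · simp [sub_eq_zero.1 h]
  · have : IsEmpty {y : K // W.toAffine.Equation x y} := ⟨fun y => hne ⟨y.1, y.2⟩⟩
    simp

theorem one_le_fiberCard {K : Type*} [Field K] [Fintype K] (W : WeierstrassCurve K) {x y : K}
    (h : W.toAffine.Equation x y) : 1 ≤ fiberCard W x := by
  have : Nonempty {y : K // W.toAffine.Equation x y} := ⟨⟨y, h⟩⟩
  exact Nat.card_pos

theorem two_le_fiberCard {K : Type*} [Field K] [Fintype K] (W : WeierstrassCurve K) {x y z : K}
    (h : W.toAffine.Equation x y) (h' : W.toAffine.Equation x z) (hyz : y ≠ z) :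
    2 ≤ fiberCard W x := by
  have : Nontrivial {y : K // W.toAffine.Equation x y} :=
    ⟨⟨y, h⟩, ⟨z, h'⟩, fun e => hyz (congrArg Subtype.val e)⟩
  exact Finite.one_lt_card

open Polynomial in
theorem two_le_rootMultiplicity {K : Type*} [Field K] {H : K[X]} (h0 : H ≠ 0) {x : K}
    (h : H.eval x = 0) (h' : (derivative H).eval x = 0) : 2 ≤ H.rootMultiplicity x :=
  (one_lt_rootMultiplicity_iff_isRoot h0).2 ⟨h, h'⟩

/-! ### Odd characteristic -/

open Polynomial in
/-- The bound `N ≥ (Q - 3) / 2` for the number `N` of affine points in odd characteristic. -/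
theorem card_le_of_odd {K : Type*} [Field K] [Fintype K] (W : WeierstrassCurve K)
    (h2 : ringChar K ≠ 2) : Fintype.card K ≤ 2 * ∑ x, fiberCard W x + 3 := by
  have two : (2 : K) ≠ 0 := Ring.two_ne_zero h2
  have four : (4 : K) ≠ 0 := by
    have : (4 : K) = 2 * 2 := by norm_num
    rw [this]; exact mul_ne_zero two two
  obtain ⟨k, hk⟩ : ∃ k, Fintype.card K = 2 * k + 1 := by
    have := FiniteField.odd_card_of_char_ne_two h2
    exact ⟨Fintype.card K / 2, by omega⟩
  have hk1 : 1 ≤ k := by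
    have := Fintype.one_lt_card (α := K); omega
  have hQ : (2 * k + 1 : K) = 0 := by
    have := FiniteField.cast_card_eq_zero K
    rw [hk] at this; exact_mod_cast this
  set f : K[X] := C 4 * X ^ 3 + C W.b₂ * X ^ 2 + C (2 * W.b₄) * X + C W.b₆ with hf
  have hfd : f.natDegree = 3 := natDegree_cubic four
  have hfe (x : K) : f.eval x = 4 * x ^ 3 + W.b₂ * x ^ 2 + 2 * W.b₄ * x + W.b₆ := by
    simp [hf]
  -- Completing the square identifies the points above `x` with the square roots of `f x`.
  have heq (x y : K) (h : (2 * y + W.a₁ * x + W.a₃) ^ 2 = f.eval x) :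
      W.toAffine.Equation x y := by
    rw [WeierstrassCurve.Affine.equation_iff]
    rw [hfe, WeierstrassCurve.b₂, WeierstrassCurve.b₄, WeierstrassCurve.b₆] at h
    apply mul_left_cancel₀ four
    linear_combination h
  have heq' (x z : K) (h : z ^ 2 = f.eval x) :
      W.toAffine.Equation x ((z - W.a₁ * x - W.a₃) / 2) := by
    apply heq
    rw [← h]
    field_simp
    ring
  set G : K[X] := C 2 * f + derivative f * (X ^ (2 * k + 1) - X) with hG
  set H : K[X] := C 2 * f ^ (k + 1) + G with hH
  have hlead : (C 2 * f ^ (k + 1)).natDegree = 3 * (k + 1) := by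
    rw [natDegree_C_mul two, natDegree_pow, hfd, mul_comm]
  have hGd : G.natDegree ≤ 2 * k + 3 := by
    have hd : (derivative f).natDegree ≤ 2 := (natDegree_derivative_le f).trans (by omega)
    have hx : (X ^ (2 * k + 1) - X : K[X]).natDegree ≤ 2 * k + 1 := by
      refine (natDegree_sub_le _ _).trans ?_
      simp
    refine natDegree_add_le_of_degree_le ?_ ?_
    · rw [natDegree_C_mul two, hfd]; omega
    · exact natDegree_mul_le.trans (by omega)
  have hHd : H.natDegree = 3 * (k + 1) := by
    rw [hH, natDegree_add_eq_left_of_natDegree_lt, hlead]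
    rw [hlead]; omega
  have hH0 : H ≠ 0 := by
    rintro h
    rw [h, natDegree_zero] at hHd
    omega
  have hpow (x : K) : x ^ (2 * k + 1) = x := by rw [← hk]; exact FiniteField.pow_card x
  have hev (x : K) : H.eval x = 2 * f.eval x * (f.eval x ^ k + 1) := by
    simp only [hH, hG, eval_add, eval_mul, eval_pow, eval_C, eval_sub, eval_X, hpow]
    ring
  have hev' (x : K) : (derivative H).eval x = (derivative f).eval x * (f.eval x ^ k + 1) := by
    simp only [hH, hG, derivative_add, derivative_mul, derivative_C, derivative_pow,
      derivative_sub, derivative_X, eval_add, eval_mul, eval_pow, eval_C, eval_sub, eval_X, hpow,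
      eval_zero, eval_one, Nat.add_sub_cancel]
    push_cast
    linear_combination (f.eval x ^ k * (derivative f).eval x +
      (derivative f).eval x * x ^ (2 * k)) * hQ
  have key := two_mul_card_le H (fiberCard W) (fun x => by
    by_cases h0 : f.eval x = 0
    · have h1 : 1 ≤ fiberCard W x := one_le_fiberCard W (heq' x 0 (by rw [h0]; ring))
      have h3 : 0 < H.rootMultiplicity x :=
        (rootMultiplicity_pos hH0).2 (by rw [IsRoot, hev, h0]; ring)
      omega
    · by_cases hs : IsSquare (f.eval x)
      · obtain ⟨z, hz⟩ := hs
        have hz0 : z ≠ 0 := by rintro rfl; simp at hz; exact h0 hz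
        have := two_le_fiberCard W (heq' x z (by rw [hz]; ring))
          (heq' x (-z) (by rw [hz]; ring)) (by
            intro h
            field_simp at h
            exact hz0 (mul_left_cancel₀ two (by linear_combination h)))
        omega
      · have hm : f.eval x ^ k = -1 := by
          have hkk : Fintype.card K / 2 = k := by omega
          rcases FiniteField.pow_dichotomy h2 h0 with h | h
          · exact absurd ((FiniteField.isSquare_iff h2 h0).2 h) hs
          · rwa [hkk] at h
        have := two_le_rootMultiplicity hH0 (x := x) (by rw [hev, hm]; ring)
          (by rw [hev', hm]; ring)
        omega)
  omega

/-! ### Characteristic two -/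

/-- Additive Hilbert 90 over the field with `2 ^ n` elements: an element of absolute trace `0` has
the form `z ^ 2 + z`. -/
theorem exists_sq_add_self {K : Type*} [Field K] [Fintype K] [CharP K 2] {n : ℕ}
    (hn : Fintype.card K = 2 ^ n) (u : K) (hu : ∑ i ∈ Finset.range n, u ^ 2 ^ i = 0) :
    ∃ z : K, z ^ 2 + z = u := by
  classical
  let A := AlgebraicClosure K
  have : CharP A 2 := charP_of_injective_algebraMap (algebraMap K A).injective 2
  obtain ⟨z, hz⟩ : ∃ z : A, z ^ 2 + z = algebraMap K A u := by
    have hd : (Polynomial.C (1 : A) * Polynomial.X ^ 2 + Polynomial.C 1 * Polynomial.X +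
        Polynomial.C (-algebraMap K A u)).degree ≠ 0 := by
      rw [Polynomial.degree_quadratic one_ne_zero]; decide
    obtain ⟨z, hz⟩ := IsAlgClosed.exists_root _ hd
    refine ⟨z, ?_⟩
    simp [Polynomial.IsRoot] at hz
    linear_combination hz
  -- The trace of `z ^ 2 + z` telescopes, so `z` is fixed by the Frobenius of `K`.
  have tel : ∀ j : ℕ, ∑ i ∈ Finset.range j, (z ^ 2 + z) ^ 2 ^ i = z ^ 2 ^ j + z := by
    intro j
    induction j with
    | zero => simp [CharTwo.add_self_eq_zero]
    | succ j ih =>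
      rw [Finset.sum_range_succ, ih, add_pow_char_pow, ← pow_mul, ← pow_succ']
      linear_combination CharTwo.add_self_eq_zero (z ^ 2 ^ j)
  have hfix : z ^ Fintype.card K - z = 0 := by
    have h := congrArg (algebraMap K A) hu
    rw [map_sum] at h
    simp only [map_pow, ← hz, map_zero] at h
    rw [tel] at h
    rw [hn, CharTwo.sub_eq_add, h]
  have hroot := FiniteField.roots_X_pow_card_sub_X K
  have hprod := Polynomial.prod_multiset_X_sub_C_of_monic_of_roots_card_eq
    (p := (Polynomial.X ^ Fintype.card K - Polynomial.X : Polynomial K))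
    (Polynomial.monic_X_pow_sub (by
      rw [Polynomial.degree_X]; exact_mod_cast Fintype.one_lt_card))
    (by rw [hroot, FiniteField.X_pow_card_sub_X_natDegree_eq K Fintype.one_lt_card]; rfl)
  rw [hroot] at hprod
  change ∏ a : K, (Polynomial.X - Polynomial.C a) = _ at hprod
  replace hprod := congrArg (Polynomial.aeval z) hprod
  simp only [map_prod, map_sub, map_pow, Polynomial.aeval_X, Polynomial.aeval_C, hfix] at hprod
  obtain ⟨w, -, hw⟩ := Finset.prod_eq_zero_iff.1 hprod
  refine ⟨w, (algebraMap K A).injective ?_⟩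
  rw [map_add, map_pow, ← hz, ← sub_eq_zero.1 hw]

open Polynomial in
theorem derivative_pow_two_mul {K : Type*} [Field K] [CharP K 2] (p : K[X]) (k : ℕ) :
    derivative (p ^ (2 * k)) = 0 := by
  have : (2 : K) = 0 := CharTwo.two_eq_zero
  simp [derivative_pow, this]

open Polynomial in
/-- The bound `N ≥ Q / 2 - 1` for the number `N` of affine points in characteristic two, where
`Q = 4 * 2 ^ k ≥ 8`. The hypothesis `hW` holds for every nonsingular `W`, and for `Q = 4` the
leading terms of the auxiliary polynomial could cancel. -/
theorem card_le_of_even {K : Type*} [Field K] [Fintype K] [CharP K 2] (W : WeierstrassCurve K)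
    (hW : ¬ (W.a₁ = 0 ∧ W.a₃ = 0)) {k : ℕ} (hk : Fintype.card K = 2 ^ (k + 2)) (hk1 : 1 ≤ k) :
    Fintype.card K ≤ 2 * ∑ x, fiberCard W x + 2 := by
  have two : (2 : K) = 0 := CharTwo.two_eq_zero
  obtain ⟨M, hM⟩ : ∃ M, M = 2 ^ k := ⟨_, rfl⟩
  have hM2 : 2 ≤ M := by
    rw [hM]; exact Nat.le_self_pow (by omega) 2
  have hQ : Fintype.card K = 4 * M := by rw [hk, hM]; ring
  set f : K[X] := C 1 * X ^ 3 + C W.a₂ * X ^ 2 + C W.a₄ * X + C W.a₆ with hf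
  set h : K[X] := C W.a₁ * X + C W.a₃ with hh
  have hfd : f.natDegree = 3 := natDegree_cubic one_ne_zero
  have hf0 : f ≠ 0 := by rintro h; rw [h] at hfd; simp at hfd
  have hhd : h.natDegree ≤ 1 := natDegree_linear_le
  have hh0 : h ≠ 0 := by
    intro h0
    apply hW
    constructor
    · simpa [hh] using congrArg (coeff · 1) h0
    · simpa [hh] using congrArg (coeff · 0) h0
  have heq (x y : K) : W.toAffine.Equation x y ↔ y ^ 2 + h.eval x * y = f.eval x := by
    rw [WeierstrassCurve.Affine.equation_iff]
    simp only [hf, hh, eval_add, eval_mul, eval_pow, eval_C, eval_X]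
    constructor <;> intro e <;> linear_combination e
  -- `B + f ^ (2 * M)` is `h ^ (4 * M) * (Tr (f / h ^ 2) + 1)`, with its leading term split off.
  set B : K[X] := ∑ i ∈ Finset.range (k + 1), f ^ 2 ^ i * h ^ (2 * (2 * M - 2 ^ i)) +
    h ^ (4 * M) with hB
  set G : K[X] := h * B + derivative f * (X ^ (4 * M) - X) with hG
  set H : K[X] := h * f ^ (2 * M) + G with hH
  have hpi : ∀ i ∈ Finset.range (k + 1), 2 ^ i ≤ M := fun i hi => by
    rw [hM]; exact Nat.pow_le_pow_right (by norm_num) (by simpa [Nat.lt_succ_iff] using hi)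
  have hlead : (h * f ^ (2 * M)).natDegree = h.natDegree + 6 * M := by
    rw [natDegree_mul hh0 (pow_ne_zero _ hf0), natDegree_pow, hfd]; ring
  have hhp (j : ℕ) : (h ^ j).natDegree ≤ j :=
    natDegree_pow_le.trans (by nlinarith)
  have hBd : B.natDegree ≤ 5 * M := by
    refine natDegree_add_le_of_degree_le (natDegree_sum_le_of_forall_le _ _ fun i hi => ?_)
      ((hhp _).trans (by omega))
    have h1 := hpi i hi
    have h2 := hhp (2 * (2 * M - 2 ^ i))
    have h3 : (f ^ 2 ^ i).natDegree = 2 ^ i * 3 := by rw [natDegree_pow, hfd]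
    exact natDegree_mul_le.trans (by omega)
  have hGd : G.natDegree < h.natDegree + 6 * M := by
    have hd : (derivative f).natDegree ≤ 2 := (natDegree_derivative_le f).trans (by omega)
    have hx : (X ^ (4 * M) - X : K[X]).natDegree ≤ 4 * M := by
      refine (natDegree_sub_le _ _).trans ?_
      simp; omega
    have h1 : (h * B).natDegree ≤ h.natDegree + 5 * M := natDegree_mul_le.trans (by omega)
    have h2 : (derivative f * (X ^ (4 * M) - X)).natDegree ≤ 4 * M + 2 :=
      natDegree_mul_le.trans (by omega)
    exact (natDegree_add_le _ _).trans_lt (by omega)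
  have hHd : H.natDegree = h.natDegree + 6 * M := by
    rw [hH, natDegree_add_eq_left_of_natDegree_lt (by rwa [hlead]), hlead]
  have hH0 : H ≠ 0 := by
    intro h'
    rw [h', natDegree_zero] at hHd
    omega
  have hpow (x : K) : x ^ (4 * M) = x := by rw [← hQ]; exact FiniteField.pow_card x
  have hev (x : K) : H.eval x = h.eval x * (B + f ^ (2 * M)).eval x := by
    simp only [hH, hG, eval_add, eval_mul, eval_pow, eval_sub, eval_X, hpow]
    ring
  -- Only the term with `i = 0` contributes: all the others are squares.
  have hBder : derivative (B + f ^ (2 * M)) = derivative f * h ^ (4 * M - 2) := by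
    rw [hB, Finset.sum_range_succ']
    have h4 : derivative (h ^ (4 * M)) = 0 := by
      rw [show 4 * M = 2 * (2 * M) by ring]; exact derivative_pow_two_mul _ _
    simp only [derivative_add, derivative_sum, derivative_mul, derivative_pow_two_mul, pow_succ',
      h4, mul_zero, zero_mul, add_zero, pow_zero, pow_one, Finset.sum_const_zero, zero_add]
    congr 2
    omega
  have hev' (x : K) (hx : h.eval x ≠ 0) (hA : (B + f ^ (2 * M)).eval x = 0) :
      (derivative H).eval x = 0 := by
    have e : H = h * (B + f ^ (2 * M)) + derivative f * (X ^ (4 * M) - X) := by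
      rw [hH, hG]; ring
    have h1 : h.eval x * h.eval x ^ (4 * M - 2) = 1 := by
      apply mul_left_cancel₀ hx
      rw [← pow_succ', ← pow_succ', mul_one]
      rw [show 4 * M - 2 + 1 + 1 = 4 * M by omega, hpow]
    have h4 : derivative (X ^ (4 * M) : K[X]) = 0 := by
      rw [show 4 * M = 2 * (2 * M) by ring]; exact derivative_pow_two_mul _ _
    rw [e, derivative_add, derivative_mul, derivative_mul, hBder]
    simp only [derivative_sub, h4, derivative_X, eval_add, eval_mul, eval_sub, eval_pow, eval_X,
      hpow, eval_zero, eval_one, sub_self, mul_zero] at hA ⊢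
    linear_combination (derivative (f)).eval x * h1 + (derivative h).eval x * hA
  have key := two_mul_card_le H (fiberCard W) (fun x => by
    by_cases h0 : h.eval x = 0
    · have h1 : 1 ≤ fiberCard W x :=
        one_le_fiberCard W (y := f.eval x ^ (2 * M)) ((heq _ _).2 (by
          rw [h0, ← pow_mul, show 2 * M * 2 = 4 * M by ring, hpow]; ring))
      have h3 : 0 < H.rootMultiplicity x :=
        (rootMultiplicity_pos hH0).2 (by rw [IsRoot, hev, h0]; ring)
      omega
    · by_cases hs : ∃ y, W.toAffine.Equation x y
      · obtain ⟨y, hy⟩ := hs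
        have hy' := (heq _ _).1 hy
        have := two_le_fiberCard W hy (z := y + h.eval x) ((heq _ _).2 (by
          linear_combination hy' + (y * h.eval x + h.eval x ^ 2) * two)) (by
            simpa using h0)
        omega
        -- The trace of `f / h ^ 2` lies in `{0, 1}`; without points above `x` it is not `0`.
      · set u := f.eval x / h.eval x ^ 2 with hu
        set T := ∑ i ∈ Finset.range (k + 2), u ^ 2 ^ i with hT
        have hT0 : T ≠ 0 := by
          intro hT0
          obtain ⟨z, hz⟩ := exists_sq_add_self hk u hT0
          refine hs ⟨h.eval x * z, (heq _ _).2 ?_⟩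
          rw [hu, eq_div_iff (pow_ne_zero _ h0)] at hz
          linear_combination hz
        have hTT : T ^ 2 = T := by
          have h1 : T ^ 2 + u = T + u ^ 2 ^ (k + 2) := by
            rw [hT, ← Finset.sum_range_succ (fun i => u ^ 2 ^ i) (k + 2),
              Finset.sum_range_succ' _ (k + 2), sum_pow_char]
            simp only [← pow_mul, ← pow_succ, pow_zero, pow_one]
          have h2 : u ^ 2 ^ (k + 2) = u := by rw [← hk]; exact FiniteField.pow_card u
          rw [h2] at h1
          exact add_right_cancel h1
        have hT1 : T = 1 := mul_left_cancel₀ hT0 (by rw [← pow_two, hTT, mul_one])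
        have hA : (B + f ^ (2 * M)).eval x = 0 := by
          have e : (B + f ^ (2 * M)).eval x = h.eval x ^ (4 * M) * (T + 1) := by
            rw [hB, hT, Finset.sum_range_succ _ (k + 1)]
            simp only [eval_add, eval_finsetSum, eval_mul, eval_pow, mul_add, Finset.mul_sum,
              mul_one]
            have hterm (i : ℕ) (hi : 2 ^ i ≤ 2 * M) : h.eval x ^ (4 * M) * u ^ 2 ^ i =
                f.eval x ^ 2 ^ i * h.eval x ^ (2 * (2 * M - 2 ^ i)) := by
              rw [hu, div_pow, ← pow_mul,
                show 4 * M = 2 * (2 * M - 2 ^ i) + 2 * 2 ^ i by omega, pow_add]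
              field_simp
            have h2M : 2 ^ (k + 1) = 2 * M := by rw [hM]; ring
            rw [hterm (k + 1) h2M.le, h2M,
              Finset.sum_congr rfl fun i hi => hterm i ((hpi i hi).trans (by omega))]
            simp only [Nat.sub_self, mul_zero, pow_zero, mul_one]
            ring
          rw [e, hT1, CharTwo.add_self_eq_zero, mul_zero]
        have := two_le_rootMultiplicity hH0 (x := x) (by rw [hev, hA, mul_zero])
          (hev' x h0 hA)
        omega)
  omega


/-- The admissible pairs for genus-one DS-curves: if `W` is an elliptic curve
(a Weierstrass curve with nonzero discriminant) over a finite field `F` with `q`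
elements, `L/F` is a finite extension of degree `m > 1`, and the number of points of
`W` over `F` (affine solutions plus the point at infinity) equals the number of points
of the base change of `W` over `L`, then `(q, m)` is one of `(2,2), (2,3), (3,2), (4,2)`. -/
theorem genus_one_DS_pairs (F : Type*) [Field F] [Fintype F] (q : ℕ)
    (hq : Fintype.card F = q) (W : WeierstrassCurve F) (hΔ : W.Δ ≠ 0)
    (L : Type*) [Field L] [Algebra F L] (m : ℕ) (hm : 1 < m)
    (hdeg : Module.finrank F L = m)
    (hN : Nat.card {p : F × F // W.toAffine.Equation p.1 p.2} + 1 =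
          Nat.card {p : L × L // (W.baseChange L).toAffine.Equation p.1 p.2} + 1) :
    (q, m) = (2, 2) ∨ (q, m) = (2, 3) ∨ (q, m) = (3, 2) ∨ (q, m) = (4, 2) := by
  have hfin : FiniteDimensional F L := Module.finite_of_finrank_pos (by omega)
  have : Finite L := Module.finite_of_finite F
  have := Fintype.ofFinite L
  have hL : Fintype.card L = q ^ m := by rw [← hq, ← hdeg, Module.card_eq_pow_finrank (K := F)]
  have hN' : ∑ x, fiberCard (W.baseChange L) x ≤ 2 * q := by
    rw [← card_points, ← Nat.succ.inj hN, card_points]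
    calc _ ≤ ∑ _x : F, 2 := Finset.sum_le_sum fun x _ => fiberCard_le W x
      _ = 2 * q := by simp [hq, mul_comm]
  have hq1 : 1 < q := hq ▸ Fintype.one_lt_card
  have hsq : q * q ≤ q ^ m := by
    rw [← pow_two]; exact Nat.pow_le_pow_right (by omega) hm
  have hcube : 3 ≤ m → q * q * q ≤ q ^ m := fun h => by
    rw [← pow_two, ← pow_succ]; exact Nat.pow_le_pow_right (by omega) h
  have hfour : 4 ≤ m → q * q * q * q ≤ q ^ m := fun h => by
    rw [← pow_two, ← pow_succ, ← pow_succ]; exact Nat.pow_le_pow_right (by omega) h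
  by_cases h2 : ringChar L = 2
  · have : CharP L 2 := ringChar.of_eq h2
    have : CharP F 2 := (RingHom.charP_iff (algebraMap F L) (algebraMap F L).injective 2).2 this
    have hW : ¬ ((W.baseChange L).a₁ = 0 ∧ (W.baseChange L).a₃ = 0) := by
      rintro ⟨h1, h3⟩
      have h1' : W.a₁ = 0 := (algebraMap F L).injective (by simpa using h1)
      have h3' : W.a₃ = 0 := (algebraMap F L).injective (by simpa using h3)
      apply hΔ
      have two : (2 : F) = 0 := CharTwo.two_eq_zero
      rw [WeierstrassCurve.Δ, WeierstrassCurve.b₂, WeierstrassCurve.b₄, WeierstrassCurve.b₆, h1',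
        h3', show (27 : F) = 2 * 13 + 1 by norm_num, show (8 : F) = 2 * 4 by norm_num,
        show (4 : F) = 2 * 2 by norm_num, two]
      ring
    obtain ⟨n, -, hn⟩ := FiniteField.card F 2
    have heven : 2 ∣ q := by rw [← hq, hn]; exact dvd_pow_self 2 n.ne_zero
    have hbound : q ^ m ≤ 4 * q + 2 ∨ q ^ m < 8 := by
      by_contra! hc
      obtain ⟨r, -, hr⟩ := FiniteField.card L 2
      have hr3 : 3 ≤ (r : ℕ) := by
        by_contra! hlt
        have : 2 ^ (r : ℕ) ≤ 2 ^ 2 := Nat.pow_le_pow_right (by norm_num) (by omega)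
        omega
      have := card_le_of_even (W.baseChange L) hW (k := r - 2)
        (by rw [hr]; congr 1; omega) (by omega)
      omega
    have hq4 : q ≤ 4 := by
      by_contra! hc
      have : 6 * q ≤ q * q := Nat.mul_le_mul_right q (by omega)
      omega
    have hm3 : m ≤ 3 := by
      by_contra! hc
      have := hfour hc
      interval_cases q <;> omega
    interval_cases q <;> interval_cases m <;> simp at *
  · have hbound := card_le_of_odd (W.baseChange L) h2
    have hodd : q % 2 = 1 := by
      have h := FiniteField.odd_card_of_char_ne_two h2
      rw [hL] at h
      have : Odd (q ^ m) := Nat.odd_iff.2 h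
      exact Nat.odd_iff.1 ((Nat.odd_pow_iff (by omega)).1 this)
    have hq4 : q ≤ 4 := by
      by_contra! hc
      nlinarith
    have hq3 : q = 3 := by omega
    subst hq3
    have hm3 : m < 3 := by
      by_contra! hc
      have := hcube hc
      omega
    have : m = 2 := by omega
    simp [this]
end

section
/- Let s ≥ 1 be an integer, q = 3^{2s+1}, q₀ = 3^s, and let i ∈ {1, 2, 3, 4, 5}. Let F be a finite field with q^i elements. Then the number of triples (x, y, z) ∈ F³ satisfying both y^q − y = x^{q₀}·(x^q − x) and z^q − z = x^{q₀}·(y^q − y) equals q³. -/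
/-!
Write `φ t = t ^ q` for the relative Frobenius of `F` and put `x_j = φ^j x`, `w_j = x_j ^ q₀`, and so
on, so that all these sequences have period `i`. Every triple over the fixed field of `φ`, which has
`q` elements, is a solution, and if `x` is fixed by `φ` then so are `y` and `z`. The theorem
therefore says that the `x`-coordinate of every solution over `F` is fixed by `φ`.

The two equations express `w_j (x_{j+1} - x_j)` and `w_j² (x_{j+1} - x_j)` as differences of
consecutive terms of a periodic sequence. Raising them to the power `3q₀`, which maps `w_j` to
`x_{j+1}` and `x_j` to `w_j³`, and summing by parts does the same for `w_j³ (x_{j+1} - x_j)` and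
`w_j³ (x_{j+1}² - x_j²)`. Summation over a period yields
`∑ w_j^k (x_{j+1} - x_j) = 0` for `k ≤ 3`, and `∑ w_j³ (x_{j+1}² - x_j²) = 0`.

For `i ≤ 4` the Vandermonde determinant of the `w_j` over their exact period settles the
matter. For `i = 5` the linear relations leave a one-dimensional space for the vector `(x_{j+1} - x_j)_j`, and on that space the
quadratic relation becomes, in characteristic `3`, a constant times a product of differences of the
`w_j` (`pentagon_identity`, `no_pentagon`). Geometrically, a point of the curve together with its
Frobenius conjugates is a closed path of length `2i` in the incidence graph of the split Cayley
hexagon of `G₂`, whose girth is `12`; this forces `i ≥ 6` unless the point is fixed.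
-/

/-! ### The absence of pentagons -/

/-- The quadratic relation, evaluated on the kernel of the `4 × 5` Vandermonde matrix with nodes
`p, q, 0, r, s` and cleared of denominators by the factor `p * s`, is a product of differences of
nodes. The two sides agree only modulo `3`. -/
theorem pentagon_identity {F : Type*} [Field F] [CharP F 3] (p q r s : F) :
    p ^ 2 * s * ((q - r) * (q - s) * (r - s)) ^ 2
      + p * q * s * ((p - r) * (p - s) * (r - s)) ^ 2
      + 2 * q ^ 2 * s * ((q - r) * (q - s) * (r - s)) * (-((p - r) * (p - s) * (r - s)))
      - (p * r * s * ((p - q) * (p - s) * (q - s)) ^ 2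
        + p * s ^ 2 * ((p - q) * (p - r) * (q - r)) ^ 2
        + 2 * r ^ 2 * p * ((p - q) * (p - s) * (q - s)) * (-((p - q) * (p - r) * (q - r))))
    = ((p - q) * (p - r) * (p - s) * (q - r) * (q - s) * (r - s))
        * ((p - q) * (s - r) * (p - s)) := by
  grind

/-- The case `i = 5`: the closing conditions of a pentagon with distinct `w_j` make its last side
degenerate. -/
theorem no_pentagon {F : Type*} [Field F] [CharP F 3] (x₀ x₁ x₂ x₃ x₄ w₀ w₁ w₂ w₃ w₄ : F)
    (h01 : w₀ ≠ w₁) (h02 : w₀ ≠ w₂) (h03 : w₀ ≠ w₃) (h04 : w₀ ≠ w₄) (h12 : w₁ ≠ w₂)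
    (h13 : w₁ ≠ w₃) (h14 : w₁ ≠ w₄) (h23 : w₂ ≠ w₃) (h24 : w₂ ≠ w₄) (h34 : w₃ ≠ w₄)
    (T1 : w₀ * (x₁ - x₀) + w₁ * (x₂ - x₁) + w₂ * (x₃ - x₂) + w₃ * (x₄ - x₃)
      + w₄ * (x₀ - x₄) = 0)
    (T2 : w₀ ^ 2 * (x₁ - x₀) + w₁ ^ 2 * (x₂ - x₁) + w₂ ^ 2 * (x₃ - x₂) + w₃ ^ 2 * (x₄ - x₃)
      + w₄ ^ 2 * (x₀ - x₄) = 0)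
    (T3 : w₀ ^ 3 * (x₁ - x₀) + w₁ ^ 3 * (x₂ - x₁) + w₂ ^ 3 * (x₃ - x₂) + w₃ ^ 3 * (x₄ - x₃)
      + w₄ ^ 3 * (x₀ - x₄) = 0)
    (T4 : w₀ ^ 3 * (x₁ ^ 2 - x₀ ^ 2) + w₁ ^ 3 * (x₂ ^ 2 - x₁ ^ 2) + w₂ ^ 3 * (x₃ ^ 2 - x₂ ^ 2)
      + w₃ ^ 3 * (x₄ ^ 2 - x₃ ^ 2) + w₄ ^ 3 * (x₀ ^ 2 - x₄ ^ 2) = 0) :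
    x₄ = x₀ := by
  have : Fact (Nat.Prime 3) := ⟨Nat.prime_three⟩
  -- translate the nodes so that the middle one is `0`
  obtain ⟨p, rfl⟩ : ∃ p, w₀ = p + w₂ := ⟨w₀ - w₂, by ring⟩
  obtain ⟨q, rfl⟩ : ∃ p, w₁ = p + w₂ := ⟨w₁ - w₂, by ring⟩
  obtain ⟨r, rfl⟩ : ∃ p, w₃ = p + w₂ := ⟨w₃ - w₂, by ring⟩
  obtain ⟨s, rfl⟩ : ∃ p, w₄ = p + w₂ := ⟨w₄ - w₂, by ring⟩
  have hp : p ≠ 0 := by rintro rfl; simp at h02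
  have hs : s ≠ 0 := by rintro rfl; simp at h24
  have hpq : p - q ≠ 0 := by rw [sub_ne_zero]; rintro rfl; exact h01 rfl
  have hpr : p - r ≠ 0 := by rw [sub_ne_zero]; rintro rfl; exact h03 rfl
  have hps : p - s ≠ 0 := by rw [sub_ne_zero]; rintro rfl; exact h04 rfl
  have hqr : q - r ≠ 0 := by rw [sub_ne_zero]; rintro rfl; exact h13 rfl
  have hqs : q - s ≠ 0 := by rw [sub_ne_zero]; rintro rfl; exact h14 rfl
  have hrs : r - s ≠ 0 := by rw [sub_ne_zero]; rintro rfl; exact h34 rfl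
  obtain ⟨a, rfl⟩ : ∃ a, x₁ = x₀ + a := ⟨x₁ - x₀, by ring⟩
  obtain ⟨b, rfl⟩ : ∃ b, x₂ = x₀ + a + b := ⟨x₂ - x₀ - a, by ring⟩
  obtain ⟨e, rfl⟩ : ∃ e, x₄ = x₀ - e := ⟨x₀ - x₄, by ring⟩
  obtain ⟨d, rfl⟩ : ∃ d, x₃ = x₀ - e - d := ⟨x₀ - e - x₃, by ring⟩
  have S1 : p * a + q * b + r * d + s * e = 0 := by linear_combination T1
  have S2 : p ^ 2 * a + q ^ 2 * b + r ^ 2 * d + s ^ 2 * e = 0 := by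
    linear_combination T2 - 2 * w₂ * S1
  have S3 : p ^ 3 * a + q ^ 3 * b + r ^ 3 * d + s ^ 3 * e = 0 := by
    linear_combination T3 - 3 * w₂ * S2 - 3 * w₂ ^ 2 * S1
  have S4 : p ^ 3 * a ^ 2 + q ^ 3 * (b * (b + 2 * a)) - r ^ 3 * (d * (d + 2 * e))
      - s ^ 3 * e ^ 2 = 0 := by
    simp only [add_pow_char] at T4
    linear_combination T4 - 2 * x₀ * S3
  -- the solutions `(a, b, d, e)` of `S1`, `S2`, `S3` are the multiples of one vector
  obtain ⟨c, hc⟩ : ∃ c, s * e = c * (-((p - q) * (p - r) * (q - r))) :=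
    ⟨s * e / (-((p - q) * (p - r) * (q - r))), by field_simp⟩
  have ha : p * a = c * ((q - r) * (q - s) * (r - s)) := by
    apply mul_right_cancel₀ (mul_ne_zero hpq hpr)
    linear_combination S3 - (q + r) * S2 + q * r * S1 - (s - q) * (s - r) * hc
  have hb : q * b = c * (-((p - r) * (p - s) * (r - s))) := by
    apply mul_right_cancel₀ (mul_ne_zero hpq hqr)
    linear_combination -(S3 - (p + r) * S2 + p * r * S1 - (s - p) * (s - r) * hc)
  have hd : r * d = c * ((p - q) * (p - s) * (q - s)) := by
    apply mul_right_cancel₀ (mul_ne_zero hpr hqr)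
    linear_combination S3 - (p + q) * S2 + p * q * S1 - (s - p) * (s - q) * hc
  have hG : c ^ 2 * (((p - q) * (p - r) * (p - s) * (q - r) * (q - s) * (r - s))
        * ((p - q) * (s - r) * (p - s))) = 0 := by
    have key : p ^ 2 * s * (p * a) ^ 2 + p * q * s * (q * b) ^ 2
        + 2 * q ^ 2 * s * (p * a) * (q * b) - (p * r * s * (r * d) ^ 2
        + p * s ^ 2 * (s * e) ^ 2 + 2 * r ^ 2 * p * (r * d) * (s * e)) = 0 := by
      linear_combination p * s * S4
    rw [ha, hb, hd, hc] at key
    rw [← pentagon_identity]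
    linear_combination key
  have hsr : s - r ≠ 0 := by rwa [← neg_sub, neg_ne_zero]
  have hc0 : c = 0 := by simpa [hpq, hpr, hps, hqr, hqs, hrs, hsr] using hG
  have he : e = 0 := by simpa [hc0, hs] using hc
  rw [he, sub_zero]

/-! ### Solutions are rational over the fixed field of Frobenius -/

/-- The `x`-coordinate of a solution is fixed by Frobenius. Here `φ`, `τ` and `σ` stand for the
maps `t ↦ t ^ q`, `t ↦ t ^ q₀` and `t ↦ t ^ (3 * q₀)`, of which only the stated relations matter. -/
theorem frobenius_fixed {F : Type*} [Field F] [CharP F 3] (φ τ σ : F →+* F)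
    (hστ : ∀ t, σ (τ t) = φ t) (hσ : ∀ t, σ t = τ t ^ 3)
    (hφτ : ∀ t, φ (τ t) = τ (φ t)) (hφσ : ∀ t, φ (σ t) = σ (φ t))
    (i : ℕ) (hi : i = 1 ∨ i = 2 ∨ i = 3 ∨ i = 4 ∨ i = 5) (hφ : ∀ t, φ^[i] t = t)
    (x y z : F) (hy : φ y - y = τ x * (φ x - x)) (hz : φ z - z = τ x * (φ y - y)) :
    φ x = x := by
  -- `A` and `B` arise from the `σ`-images of the equations by summation by parts.
  set A := x * τ x ^ 3 - σ y with hA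
  set B := x ^ 2 * τ x ^ 3 - σ z with hB
  have hz' : φ z - z = τ x ^ 2 * (φ x - x) := by rw [hz, hy]; ring
  have hA' : φ A - A = τ x ^ 3 * (φ x - x) := by
    have h := congrArg σ hy
    simp only [map_sub, map_mul, hστ] at h
    rw [hA]
    simp only [map_sub, map_mul, map_pow, hφτ, hφσ, hσ (φ x), hσ x] at h ⊢
    linear_combination -h
  have hB' : φ B - B = τ x ^ 3 * (φ x ^ 2 - x ^ 2) := by
    have h := congrArg σ hz'
    simp only [map_sub, map_mul, map_pow, hστ] at h
    rw [hB]
    simp only [map_sub, map_mul, map_pow, hφτ, hφσ, hσ (φ x), hσ x] at h ⊢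
    linear_combination -h
  -- the sum of a coboundary over one period of `φ` vanishes
  have clos : ∀ h g : F, φ h - h = g → ∑ j ∈ Finset.range i, φ^[j] g = 0 := by
    intro h g hg
    have hs := Finset.sum_range_sub (fun j => φ^[j] h) i
    rw [hφ, Function.iterate_zero, id_eq, sub_self] at hs
    rw [← hs]
    refine Finset.sum_congr rfl fun j _ => ?_
    rw [← hg, iterate_map_sub, Function.iterate_succ_apply]
  have T1 := clos _ _ hy
  have T2 := clos _ _ hz'
  have T3 := clos _ _ hA'
  have T4 := clos _ _ hB'
  clear_value A B
  by_contra hne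
  have inj : ∀ {a b : F}, φ a = φ b → a = b := fun h => φ.injective h
  have injτ : ∀ {a b : F}, τ a = τ b → a = b := fun h => τ.injective h
  rcases hi with rfl | rfl | rfl | rfl | rfl <;>
    simp only [Function.iterate_succ, Function.iterate_zero, Function.comp_apply, id_eq,
      Finset.sum_range_succ, Finset.sum_range_zero, zero_add, map_sub, map_mul, map_pow,
      hφτ] at hφ T1 T2 T3 T4 <;>
    simp only [hφ] at T1 T2 T3 T4
  · exact hne (hφ x)
  · have h : (τ x - τ (φ x)) * (φ x - x) = 0 := by linear_combination T1
    rcases mul_eq_zero.1 h with h | h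
    · exact hne (injτ (sub_eq_zero.1 h)).symm
    · exact hne (sub_eq_zero.1 h)
  · have e2 : φ (φ x) ≠ x := fun h => hne (by simpa [h] using hφ x)
    have h : (τ x - τ (φ x)) * (τ x - τ (φ (φ x))) * (φ x - x) = 0 := by
      linear_combination T2 - (τ (φ x) + τ (φ (φ x))) * T1
    rcases mul_eq_zero.1 h with h | h
    · rcases mul_eq_zero.1 h with h | h
      · exact hne (injτ (sub_eq_zero.1 h)).symm
      · exact e2 (injτ (sub_eq_zero.1 h)).symm
    · exact hne (sub_eq_zero.1 h)
  · have e3 : φ (φ (φ x)) ≠ x := fun h => hne (by simpa [h] using hφ x)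
    by_cases e2 : φ (φ x) = x
    · -- the sum over four terms is twice the sum over the true period `2`
      simp only [e2] at T1
      have h2 : (2 : F) ≠ 0 := by
        intro h2
        have h3 : (3 : F) = 0 := by exact_mod_cast CharP.cast_eq_zero F 3
        exact one_ne_zero (by linear_combination h3 - h2 : (1 : F) = 0)
      have h : 2 * ((τ x - τ (φ x)) * (φ x - x)) = 0 := by linear_combination T1
      rcases mul_eq_zero.1 ((mul_eq_zero.1 h).resolve_left h2) with h | h
      · exact hne (injτ (sub_eq_zero.1 h)).symm
      · exact hne (sub_eq_zero.1 h)
    · have h : (τ x - τ (φ x)) * (τ x - τ (φ (φ x))) * (τ x - τ (φ (φ (φ x))))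
          * (φ x - x) = 0 := by
        linear_combination T3 - (τ (φ x) + τ (φ (φ x)) + τ (φ (φ (φ x)))) * T2
          + (τ (φ x) * τ (φ (φ x)) + τ (φ x) * τ (φ (φ (φ x)))
            + τ (φ (φ x)) * τ (φ (φ (φ x)))) * T1
      rcases mul_eq_zero.1 h with h | h
      · rcases mul_eq_zero.1 h with h | h
        · rcases mul_eq_zero.1 h with h | h
          · exact hne (injτ (sub_eq_zero.1 h)).symm
          · exact e2 (injτ (sub_eq_zero.1 h)).symm
        · exact e3 (injτ (sub_eq_zero.1 h)).symm
      · exact hne (sub_eq_zero.1 h)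
  · have e2 : φ (φ x) ≠ x := fun h => hne (by simpa [h] using hφ x)
    have e3 : φ (φ (φ x)) ≠ x := fun h => e2 (by simpa [h] using hφ x)
    have e4 : φ (φ (φ (φ x))) ≠ x := fun h => hne (by simpa [h] using hφ x)
    exact e4 (no_pentagon _ _ _ _ _ _ _ _ _ _
      (fun h => hne (injτ h).symm) (fun h => e2 (injτ h).symm) (fun h => e3 (injτ h).symm)
      (fun h => e4 (injτ h).symm) (fun h => hne (inj (injτ h)).symm)
      (fun h => e2 (inj (injτ h)).symm) (fun h => e3 (inj (injτ h)).symm)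
      (fun h => hne (inj (inj (injτ h))).symm) (fun h => e2 (inj (inj (injτ h))).symm)
      (fun h => hne (inj (inj (inj (injτ h)))).symm) T1 T2 T3 T4)

/-! ### Counting -/

open Polynomial in
/-- The fixed field of the `q`-power map has `q` elements: `X ^ q - X` is separable and divides
`X ^ (q ^ i) - X`, which splits in `F`. -/
theorem card_fixed {F : Type*} [Field F] [Fintype F] [CharP F 3] (m i : ℕ) (hm : m ≠ 0)
    (hF : Fintype.card F = (3 ^ m) ^ i) :
    Nat.card {t : F // t ^ 3 ^ m = t} = 3 ^ m := by
  classical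
  have h1 : 1 < 3 ^ m := Nat.one_lt_pow hm (by norm_num)
  have hne : (X ^ 3 ^ m - X : F[X]) ≠ 0 := FiniteField.X_pow_card_sub_X_ne_zero F h1
  have hsplit : (X ^ 3 ^ m - X : F[X]).Splits := by
    have h := (FiniteField.isSplittingField_sub F F).splits
    rw [Algebra.algebraMap_self, Polynomial.map_id] at h
    refine h.of_dvd (FiniteField.X_pow_card_sub_X_ne_zero _ Fintype.one_lt_card) ?_
    rw [hF, ← pow_mul]
    exact dvd_pow_pow_sub_self_of_dvd (Dvd.intro _ rfl)
  have hcard := card_rootSet_eq_natDegree (K := F)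
    (galois_poly_separable (K := F) 3 (3 ^ m) (dvd_pow_self 3 hm))
    (by rwa [Algebra.algebraMap_self, Polynomial.map_id])
  rw [FiniteField.X_pow_card_sub_X_natDegree_eq F h1, ← Nat.card_eq_fintype_card] at hcard
  refine Eq.trans (Nat.card_congr (Equiv.subtypeEquivRight fun t => ?_)) hcard
  simp [mem_rootSet, hne, sub_eq_zero]

/-- The Ree curve: for `q = 3^{2s+1}` and `q₀ = 3^s` with `s ≥ 1`, and `i ∈ {1,…,5}`,
the number of affine points `(x, y, z)` over the field with `q^i` elements satisfying
`y^q - y = x^{q₀}(x^q - x)` and `z^q - z = x^{q₀}(y^q - y)` equals `q³`. -/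
theorem ree_curve_count (s : ℕ) (hs : 1 ≤ s) (q q₀ : ℕ)
    (hq : q = 3 ^ (2 * s + 1)) (hq₀ : q₀ = 3 ^ s)
    (i : ℕ) (hi : i = 1 ∨ i = 2 ∨ i = 3 ∨ i = 4 ∨ i = 5)
    (F : Type*) [Field F] [Fintype F] (hF : Fintype.card F = q ^ i) :
    Nat.card {p : F × F × F //
        p.2.1 ^ q - p.2.1 = p.1 ^ q₀ * (p.1 ^ q - p.1) ∧
        p.2.2 ^ q - p.2.2 = p.1 ^ q₀ * (p.2.1 ^ q - p.2.1)} = q ^ 3 := by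
  subst hq hq₀
  have : Fact (Nat.Prime 3) := ⟨Nat.prime_three⟩
  have : CharP F 3 := charP_of_card_eq_prime_pow (hF.trans (pow_mul _ _ _).symm)
  have hfix : ∀ x y z : F,
      y ^ 3 ^ (2 * s + 1) - y = x ^ 3 ^ s * (x ^ 3 ^ (2 * s + 1) - x) →
      z ^ 3 ^ (2 * s + 1) - z = x ^ 3 ^ s * (y ^ 3 ^ (2 * s + 1) - y) →
      x ^ 3 ^ (2 * s + 1) = x := by
    intro x y z hy hz
    refine frobenius_fixed (iterateFrobenius F 3 (2 * s + 1)) (iterateFrobenius F 3 s)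
      (iterateFrobenius F 3 (s + 1)) ?_ ?_ ?_ ?_ i hi ?_ x y z hy hz
    all_goals intro t
    · simp only [iterateFrobenius_def, ← pow_mul, ← pow_add]; congr 2; omega
    · rw [iterateFrobenius_def, iterateFrobenius_def, ← pow_mul, ← pow_succ]
    · simp only [iterateFrobenius_def, ← pow_mul, mul_comm]
    · simp only [iterateFrobenius_def, ← pow_mul, mul_comm]
    · have h : ∀ n, (iterateFrobenius F 3 (2 * s + 1))^[n] t = t ^ (3 ^ (2 * s + 1)) ^ n := by
        intro n
        induction n with
        | zero => simp
        | succ n ih => rw [Function.iterate_succ_apply', ih, iterateFrobenius_def, ← pow_mul,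
            ← pow_succ]
      rw [h, ← hF, FiniteField.pow_card]
  have hS := card_fixed (F := F) (2 * s + 1) i (by omega) hF
  have e : {p : F × F × F //
        p.2.1 ^ 3 ^ (2 * s + 1) - p.2.1 = p.1 ^ 3 ^ s * (p.1 ^ 3 ^ (2 * s + 1) - p.1) ∧
        p.2.2 ^ 3 ^ (2 * s + 1) - p.2.2 = p.1 ^ 3 ^ s * (p.2.1 ^ 3 ^ (2 * s + 1) - p.2.1)} ≃
      {t : F // t ^ 3 ^ (2 * s + 1) = t} × {t : F // t ^ 3 ^ (2 * s + 1) = t} ×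
        {t : F // t ^ 3 ^ (2 * s + 1) = t} :=
    { toFun := fun p =>
        have hx := hfix _ _ _ p.2.1 p.2.2
        have hy : p.1.2.1 ^ 3 ^ (2 * s + 1) = p.1.2.1 := by
          have h := p.2.1
          rwa [hx, sub_self, mul_zero, sub_eq_zero] at h
        have hz : p.1.2.2 ^ 3 ^ (2 * s + 1) = p.1.2.2 := by
          have h := p.2.2
          rwa [hy, sub_self, mul_zero, sub_eq_zero] at h
        (⟨p.1.1, hx⟩, ⟨p.1.2.1, hy⟩, ⟨p.1.2.2, hz⟩)
      invFun := fun p => ⟨(p.1.1, p.2.1.1, p.2.2.1), by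
        simp only [p.1.2, p.2.1.2, p.2.2.2, sub_self, mul_zero, and_self]⟩
      left_inv := fun _ => rfl
      right_inv := fun _ => rfl }
  rw [Nat.card_congr e, Nat.card_prod, Nat.card_prod, hS]
  ring
end
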